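/- Fix a node i, a class c, a learning rate η > 0, and current weights W[t] = (W^{(0)}[t], …, W^{(L)}[t]). Let ε ∈ ℝ^{|B|×C} have rows ε_m = softmax(Z(W[t])_m) - onehot(Y_m) for m ∈ B, and perform the gradient step W^{(l)}[t+1] = W^{(l)}[t] - η ((P_rw^l X)_B)^T ε for every 0 ≤ l ≤ L, where (P_rw^l X)_B is the submatrix of rows of P_rw^l X indexed by B. Define χ^{(l)} ∈ ℝ^{|B|} by (χ^{(l)})_m = Σ_{j,k} (P_rw^l)_{ij} (P_rw^l)_{mk} ⟨X_j, X_k⟩. Then |ℓ(Z(W[t+1])_i, c) - ℓ(Z(W[t])_i, c)| ≤ √2 · η · ‖ε‖_F · Σ_{l=0}^{L} ‖χ^{(l)}‖₂, where ‖·‖_F is the Frobenius norm. -/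

import Mathlib

open Finset

/-- The softmax function on `ℝ^C`. -/
noncomputable def softmax {C : ℕ} (z : Fin C → ℝ) (c : Fin C) : ℝ :=
  Real.exp (z c) / ∑ b, Real.exp (z b)

/-- Cross-entropy loss of logits `z` with respect to class `c`. -/
noncomputable def xent {C : ℕ} (z : Fin C → ℝ) (c : Fin C) : ℝ :=
  - Real.log (softmax z c)

/-!
For a layer `l` let `h` be the row of `P_rw^l X` at the node `i`, and `G` its batch rows. The
gradient step moves the logits at `i` by `-η Σ_l h (Gᵀ ε) = -η (Σ_l G h) ε`, and `G h = χ^{(l)}`.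
Cauchy–Schwarz and the triangle inequality bound the size of this move, and the cross-entropy is
`√2`-Lipschitz: it equals `log Σ_b exp (z_b - z_c)`, where log-sum-exp is `1`-Lipschitz in the sup
norm and each `z_b - z_c` is `√2`-Lipschitz in the Euclidean norm.
-/

section Lipschitz

variable {ι : Type*} [Fintype ι]

lemma sum_exp_pos [Nonempty ι] (z : ι → ℝ) : 0 < ∑ b, Real.exp (z b) :=
  sum_pos (fun _ _ => Real.exp_pos _) univ_nonempty

lemma log_sum_exp_le_log_sum_exp_add [Nonempty ι] {w z : ι → ℝ} {K : ℝ}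
    (h : ∀ b, w b ≤ z b + K) :
    Real.log (∑ b, Real.exp (w b)) ≤ Real.log (∑ b, Real.exp (z b)) + K := by
  have sum_le : ∑ b, Real.exp (w b) ≤ (∑ b, Real.exp (z b)) * Real.exp K := by
    rw [sum_mul]
    gcongr with b
    rw [← Real.exp_add]
    exact Real.exp_le_exp.mpr (h b)
  calc Real.log (∑ b, Real.exp (w b))
      ≤ Real.log ((∑ b, Real.exp (z b)) * Real.exp K) := Real.log_le_log (sum_exp_pos w) sum_le
    _ = Real.log (∑ b, Real.exp (z b)) + K := by
      rw [Real.log_mul (sum_exp_pos z).ne' (Real.exp_ne_zero K), Real.log_exp]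

lemma apply_sub_apply_le_sqrt_two_mul_norm (x : EuclideanSpace ℝ ι) (b c : ι) :
    x b - x c ≤ √2 * ‖x‖ := by
  classical
  obtain rfl | hbc := eq_or_ne b c
  · rw [sub_self]
    positivity
  · have pair_le : x b ^ 2 + x c ^ 2 ≤ ∑ q, x q ^ 2 := by
      rw [← sum_pair (f := fun q => x q ^ 2) hbc]
      exact sum_le_univ_sum_of_nonneg fun _ => sq_nonneg _
    simp only [EuclideanSpace.norm_eq, Real.norm_eq_abs, sq_abs]
    rw [← Real.sqrt_mul zero_le_two]
    apply Real.le_sqrt_of_sq_le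
    linarith [sq_nonneg (x b + x c)]

lemma xent_eq_log_sum_exp_sub {C : ℕ} (z : Fin C → ℝ) (c : Fin C) :
    xent z c = Real.log (∑ b, Real.exp (z b)) - z c := by
  have : Nonempty (Fin C) := ⟨c⟩
  rw [xent, softmax, Real.log_div (Real.exp_ne_zero _) (sum_exp_pos z).ne', Real.log_exp, neg_sub]

lemma xent_sub_xent_le {C : ℕ} (w z : Fin C → ℝ) (c : Fin C) :
    xent w c - xent z c ≤ √2 * ‖WithLp.toLp 2 (w - z)‖ := by
  have : Nonempty (Fin C) := ⟨c⟩
  have shift (b : Fin C) : w b ≤ z b + (w c - z c + √2 * ‖WithLp.toLp 2 (w - z)‖) := by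
    have := apply_sub_apply_le_sqrt_two_mul_norm (WithLp.toLp 2 (w - z)) b c
    simp only [Pi.sub_apply] at this
    linarith
  rw [xent_eq_log_sum_exp_sub, xent_eq_log_sum_exp_sub]
  linarith [log_sum_exp_le_log_sum_exp_add shift]

lemma abs_xent_sub_xent_le {C : ℕ} (w z : Fin C → ℝ) (c : Fin C) :
    |xent w c - xent z c| ≤ √2 * ‖WithLp.toLp 2 (w - z)‖ := by
  refine abs_sub_le_iff.mpr ⟨xent_sub_xent_le w z c, ?_⟩
  have := xent_sub_xent_le z w c
  rwa [WithLp.toLp_sub, norm_sub_rev, ← WithLp.toLp_sub] at this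

end Lipschitz

section Matrices

open Matrix

variable {κ μ ν β δ γ R : Type*} [Fintype β]

lemma norm_toLp_vecMul_le [Fintype γ] (v : β → ℝ) (M : Matrix β γ ℝ) :
    ‖WithLp.toLp 2 (v ᵥ* M)‖ ≤ ‖WithLp.toLp 2 v‖ * √(∑ m, ∑ q, M m q ^ 2) := by
  simp only [EuclideanSpace.norm_eq, Real.norm_eq_abs, sq_abs]
  rw [← Real.sqrt_mul (sum_nonneg fun _ _ => sq_nonneg _)]
  apply Real.sqrt_le_sqrt
  rw [sum_comm, mul_sum]
  exact sum_le_sum fun q _ => sum_mul_sq_le_sq_mul_sq univ v (M · q)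

lemma mul_row_dotProduct_mul_row [CommSemiring R] [Fintype μ] [Fintype δ]
    (P : Matrix ν μ R) (X : Matrix μ δ R) (i n : ν) :
    (P * X) i ⬝ᵥ (P * X) n = ∑ j, ∑ k, P i j * P n k * ∑ r, X j r * X k r := by
  calc (P * X) i ⬝ᵥ (P * X) n
      = ∑ r, ∑ j, ∑ k, P i j * X j r * (P n k * X k r) := by
        simp only [dotProduct, mul_apply, sum_mul_sum]
    _ = ∑ j, ∑ k, ∑ r, P i j * X j r * (P n k * X k r) :=
      sum_comm.trans (sum_congr rfl fun _ _ => sum_comm)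
    _ = ∑ j, ∑ k, P i j * P n k * ∑ r, X j r * X k r := by
      simp only [mul_sum, mul_mul_mul_comm]

lemma sum_vecMul_sub_sum_vecMul_of_gradient_step [CommRing R] [Fintype δ] {s : Finset κ}
    {W W' : κ → Matrix δ γ R} {G : κ → Matrix β δ R} {η : R} {ε : Matrix β γ R}
    (hW' : ∀ l ∈ s, W' l = W l - η • ((G l)ᵀ * ε)) (h : κ → δ → R) :
    ∑ l ∈ s, h l ᵥ* W' l - ∑ l ∈ s, h l ᵥ* W l = -(η • ((∑ l ∈ s, G l *ᵥ h l) ᵥ* ε)) := by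
  rw [← sum_sub_distrib, Matrix.sum_vecMul, smul_sum, ← sum_neg_distrib]
  refine sum_congr rfl fun l hl => ?_
  rw [hW' l hl, vecMul_sub, vecMul_smul, ← vecMul_vecMul, vecMul_transpose, sub_sub_cancel_left]

end Matrices

open Matrix in
theorem rw_training_step_bound_general {κ μ ν β δ : Type*} [Fintype μ] [Fintype β] [Fintype δ]
    {C : ℕ} (P : κ → Matrix ν μ ℝ) (X : Matrix μ δ ℝ) (idx : β → ν) (i : ν) (c : Fin C) (η : ℝ)
    (s : Finset κ) (W : κ → Matrix δ (Fin C) ℝ) (Z : (κ → Matrix δ (Fin C) ℝ) → ν → Fin C → ℝ)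
    (hZ : ∀ V n q, Z V n q = ∑ l ∈ s, ∑ p, (P l * X) n p * V l p q)
    (ε : Matrix β (Fin C) ℝ) (W' : κ → Matrix δ (Fin C) ℝ)
    (hW' : ∀ l ∈ s, ∀ p q, W' l p q = W l p q - η * ∑ m, (P l * X) (idx m) p * ε m q)
    (χ : κ → β → ℝ)
    (hχ : ∀ l m, χ l m = ∑ j, ∑ k, P l i j * P l (idx m) k * ∑ r, X j r * X k r) :
    |xent (Z W' i) c - xent (Z W i) c| ≤
      √2 * |η| * √(∑ m, ∑ q, ε m q ^ 2) * ∑ l ∈ s, √(∑ m, χ l m ^ 2) := by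
  have logits_eq (V : κ → Matrix δ (Fin C) ℝ) : Z V i = ∑ l ∈ s, (P l * X) i ᵥ* V l := by
    ext q
    simp only [hZ, Finset.sum_apply, vecMul, dotProduct]
  have weights_eq (l) (hl : l ∈ s) :
      W' l = W l - η • (((P l * X).submatrix idx id)ᵀ * ε) := by
    ext p q
    exact hW' l hl p q
  have similarity_eq (l) : χ l = (P l * X).submatrix idx id *ᵥ (P l * X) i := by
    ext m
    rw [hχ, ← mul_row_dotProduct_mul_row, dotProduct_comm]
    rfl
  have logits_sub : Z W' i - Z W i = -(η • ((∑ l ∈ s, χ l) ᵥ* ε)) := by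
    simp only [logits_eq, similarity_eq]
    exact sum_vecMul_sub_sum_vecMul_of_gradient_step weights_eq _
  have norm_sum_similarity_le :
      ‖WithLp.toLp 2 (∑ l ∈ s, χ l)‖ ≤ ∑ l ∈ s, √(∑ m, χ l m ^ 2) := by
    simpa only [WithLp.toLp_sum, EuclideanSpace.norm_eq, Real.norm_eq_abs, sq_abs] using
      norm_sum_le s fun l => WithLp.toLp 2 (χ l)
  calc |xent (Z W' i) c - xent (Z W i) c|
      ≤ √2 * ‖WithLp.toLp 2 (Z W' i - Z W i)‖ := abs_xent_sub_xent_le _ _ c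
    _ = √2 * (|η| * ‖WithLp.toLp 2 ((∑ l ∈ s, χ l) ᵥ* ε)‖) := by
      rw [logits_sub, WithLp.toLp_neg, norm_neg, WithLp.toLp_smul, norm_smul, Real.norm_eq_abs]
    _ ≤ √2 * (|η| * ((∑ l ∈ s, √(∑ m, χ l m ^ 2)) * √(∑ m, ∑ q, ε m q ^ 2))) := by
      gcongr
      exact (norm_toLp_vecMul_le _ _).trans (by gcongr)
    _ = √2 * |η| * √(∑ m, ∑ q, ε m q ^ 2) * ∑ l ∈ s, √(∑ m, χ l m ^ 2) := by ring

/-- Theorem 6, RW training step: after one gradient-descent step on the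
batch loss of the linearized RW model, the change in cross-entropy loss at node `i`
is bounded by `√2 · η · ‖ε‖_F · Σ_l ‖χ^{(l)}‖₂`. -/
theorem rw_training_step_bound {N d C b : ℕ} (hC : 2 ≤ C)
    (A : Matrix (Fin N) (Fin N) ℝ)
    (hA01 : ∀ i j, A i j = 0 ∨ A i j = 1)
    (hAsymm : A.IsSymm)
    (deg : Fin N → ℝ) (hdeg : ∀ i, deg i = ∑ j, A i j)
    (hdegpos : ∀ i, 0 < deg i)
    (Prw : Matrix (Fin N) (Fin N) ℝ) (hPrw : ∀ i j, Prw i j = A i j / deg i)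
    (X : Matrix (Fin N) (Fin d) ℝ)
    (idx : Fin b → Fin N) (hidx : Function.Injective idx)
    (Y : Fin b → Fin C)
    (i : Fin N) (c : Fin C) (η : ℝ) (hη : 0 < η) (L : ℕ)
    (Wt : ℕ → Fin d → Fin C → ℝ)
    -- the linearized RW model
    (Zf : (ℕ → Fin d → Fin C → ℝ) → Fin N → Fin C → ℝ)
    (hZf : ∀ W' n c', Zf W' n c' =
      ∑ l ∈ range (L + 1), ∑ p, (Prw ^ l * X) n p * W' l p c')
    -- the residual matrix at step t
    (ε : Fin b → Fin C → ℝ)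
    (hε : ∀ m q, ε m q = softmax (Zf Wt (idx m)) q - (if q = Y m then (1 : ℝ) else 0))
    -- the weights after one gradient step
    (Wt1 : ℕ → Fin d → Fin C → ℝ)
    (hWt1 : ∀ l ≤ L, ∀ p q, Wt1 l p q =
      Wt l p q - η * ∑ m, (Prw ^ l * X) (idx m) p * ε m q)
    -- the expected neighborhood-similarity vectors
    (χ : ℕ → Fin b → ℝ)
    (hχ : ∀ l m, χ l m =
      ∑ j, ∑ k, (Prw ^ l) i j * (Prw ^ l) (idx m) k * ∑ r, X j r * X k r) :
    |xent (Zf Wt1 i) c - xent (Zf Wt i) c| ≤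
      Real.sqrt 2 * η * Real.sqrt (∑ m, ∑ q, (ε m q) ^ 2) *
        ∑ l ∈ range (L + 1), Real.sqrt (∑ m, (χ l m) ^ 2) := by
  simpa only [abs_of_pos hη] using rw_training_step_bound_general (Prw ^ ·) X idx i c η
    (range (L + 1)) Wt Zf hZf ε Wt1 (fun l hl => hWt1 l (mem_range_succ_iff.mp hl)) χ hχ
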